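/- (Half degree principle) Let f be a symmetric form of degree 2d in n real variables and set k := max{2, d}. Then f is nonnegative on ℝ^n if and only if f(y) ≥ 0 for all y ∈ A_k, where A_k := {x ∈ ℝ^n : |{x_1,…,x_n}| ≤ k} is the set of points having at most k distinct coordinates. -/

import Mathlib

open MvPolynomial

/-! Write `e₁, …, eₙ` for the elementary symmetric polynomials and fix a point `x`. The points `y`
with `eᵢ y = eᵢ x` for all `i ≤ k` form a compact set as soon as `k ≥ 2`, since `e₁` and `e₂`
determine `∑ yⱼ²`. Minimise `f` on it and, among the minimisers of `f`, minimise `eₖ₊₁`. Suppose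
that the resulting `y` has more than `k` distinct coordinates. Perturbing the constant term of
`∏ (X - yⱼ)`, where `j` runs over `k + 1` indices with distinct `yⱼ`, keeps its roots real, and
moves `(e₁ y, …, eₙ y)` in both directions along a line on which `e₁, …, eₖ` are constant but
`eₖ₊₁` is not. As `deg f < 2 (k + 1)`, no monomial of `f`, written as a polynomial in the `eᵢ`, has
two factors among `eₖ₊₁, …, eₙ`, so `f` is affine along this line. Being minimal at `y`, it is
constant there, and `eₖ₊₁` can be decreased: a contradiction. -/

open Finset Filter Topology

section Weights

theorem isHomogeneous_esymm (σ R : Type*) [Fintype σ] [CommSemiring R] (i : ℕ) :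
    (esymm σ R i).IsHomogeneous i := by
  refine IsHomogeneous.sum _ _ _ fun t ht => ?_
  rw [mem_powersetCard_univ] at ht
  simpa [ht] using
    IsHomogeneous.prod t (fun j => (X j : MvPolynomial σ R)) (fun _ => 1) fun j _ =>
      isHomogeneous_X R j

theorem homogeneousComponent_aeval {σ τ R : Type*} [CommSemiring R] {w : σ → ℕ}
    {e : σ → MvPolynomial τ R} (he : ∀ i, (e i).IsHomogeneous (w i)) (m : ℕ)
    (p : MvPolynomial σ R) :
    homogeneousComponent m (aeval e p) = aeval e (weightedHomogeneousComponent w m p) := by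
  classical
  induction p using MvPolynomial.induction_on' with
  | monomial s a =>
    have hw : (monomial s a).IsWeightedHomogeneous w (Finsupp.weight w s) :=
      isWeightedHomogeneous_monomial _ _ _ rfl
    have hh : (aeval e (monomial s a)).IsHomogeneous (Finsupp.weight w s) := by
      rw [aeval_monomial, algebraMap_eq, Finsupp.weight_apply]
      refine (IsHomogeneous.prod _ _ _ fun i _ => ?_).C_mul a
      simpa [mul_comm] using (he i).pow (s i)
    rw [homogeneousComponent_of_mem hh, weightedHomogeneousComponent_of_mem hw]
    split_ifs <;> simp
  | add p q hp hq => simp only [map_add, hp, hq]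

theorem exists_weightedTotalDegree_le_aeval_eq {σ τ R : Type*} [CommSemiring R] {w : σ → ℕ}
    {e : σ → MvPolynomial τ R} (he : ∀ i, (e i).IsHomogeneous (w i)) (p : MvPolynomial σ R) :
    ∃ q : MvPolynomial σ R,
      weightedTotalDegree w q ≤ (aeval e p).totalDegree ∧ aeval e q = aeval e p := by
  classical
  refine ⟨∑ m ∈ range ((aeval e p).totalDegree + 1), weightedHomogeneousComponent w m p,
    Finset.sup_le fun s hs => ?_, ?_⟩
  · obtain ⟨m, hm, hsm⟩ := mem_biUnion.mp (support_sum hs)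
    have hweight : Finsupp.weight w s = m :=
      weightedHomogeneousComponent_isWeightedHomogeneous m p (mem_support_iff.mp hsm)
    rw [hweight]
    exact Nat.lt_succ_iff.mp (mem_range.mp hm)
  · simp only [map_sum, ← homogeneousComponent_aeval he]
    exact sum_homogeneousComponent _

theorem prod_add_pow_add_prod_sub_pow {ι R : Type*} [CommRing R] {t : Finset ι} {s : ι → ℕ}
    (hs : ∑ i ∈ t, s i ≤ 1) (a c : ι → R) :
    ∏ i ∈ t, (a + c) i ^ s i + ∏ i ∈ t, (a - c) i ^ s i = 2 * ∏ i ∈ t, a i ^ s i := by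
  classical
  by_cases! h : ∃ j ∈ t, s j ≠ 0
  · obtain ⟨j, hj, hsj⟩ := h
    have hprod (b : ι → R) : ∏ i ∈ t, b i ^ s i = b j := by
      rw [prod_eq_single_of_mem j hj fun i hi hij => ?_, (sum_le_one_iff.mp hs j j hj hj hsj hsj).2,
        pow_one]
      have hsi : s i = 0 := by_contra fun hsi => hij (sum_le_one_iff.mp hs i j hi hj hsi hsj).1
      rw [hsi, pow_zero]
    rw [hprod, hprod, hprod, Pi.add_apply, Pi.sub_apply]
    ring
  · have hprod (b : ι → R) : ∏ i ∈ t, b i ^ s i = 1 :=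
      prod_eq_one fun i hi => by rw [h i hi, pow_zero]
    rw [hprod, hprod, hprod]
    norm_num

theorem eval_add_add_eval_sub_of_weightedTotalDegree_lt {σ R : Type*} [CommRing R] {w : σ → ℕ}
    {l : ℕ} {g : MvPolynomial σ R} (hg : weightedTotalDegree w g < 2 * l) {c : σ → R}
    (hc : ∀ i, w i < l → c i = 0) (a : σ → R) :
    eval (a + c) g + eval (a - c) g = 2 * eval a g := by
  simp only [eval_eq, ← sum_add_distrib, mul_sum]
  refine sum_congr rfl fun s hs => ?_
  have hexp : ∑ i ∈ s.support with l ≤ w i, s i ≤ 1 := by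
    have hweight : Finsupp.weight w s < 2 * l := (le_weightedTotalDegree w hs).trans_lt hg
    have hle : (∑ i ∈ s.support with l ≤ w i, s i) * l ≤ Finsupp.weight w s := by
      rw [Finsupp.weight_apply, Finsupp.sum, sum_mul]
      calc ∑ i ∈ s.support with l ≤ w i, s i * l ≤ ∑ i ∈ s.support with l ≤ w i, s i * w i :=
            sum_le_sum fun i hi => Nat.mul_le_mul_left _ (mem_filter.mp hi).2
        _ ≤ ∑ i ∈ s.support, s i * w i := sum_le_sum_of_subset (filter_subset _ _)
    exact Nat.lt_succ_iff.mp (Nat.lt_of_mul_lt_mul_right (hle.trans_lt hweight))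
  have hlow (b : σ → R) (hb : ∀ i, c i = 0 → b i = a i) :
      ∏ i ∈ s.support with ¬ l ≤ w i, b i ^ s i = ∏ i ∈ s.support with ¬ l ≤ w i, a i ^ s i :=
    prod_congr rfl fun i hi => by rw [hb i (hc i (not_le.mp (mem_filter.mp hi).2))]
  simp only [← prod_filter_mul_prod_filter_not s.support (fun i => l ≤ w i)]
  rw [hlow (a + c) (by simp +contextual), hlow (a - c) (by simp +contextual), ← mul_add, ← add_mul,
    prod_add_pow_add_prod_sub_pow hexp]
  ring

end Weights

section ElementarySymmetricMap

variable {σ R : Type*} [Fintype σ]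

/-- The map `x ↦ (e₁ x, …, eₙ x)` given by the elementary symmetric polynomials in `n = card σ`
variables. Indices are shifted by one: the `i`-th entry is `eᵢ₊₁ x`. -/
noncomputable def esymmMap [CommSemiring R] (x : σ → R) : Fin (Fintype.card σ) → R :=
  fun i => eval x (esymm σ R (i + 1))

theorem exists_weightedTotalDegree_le_eval_esymmMap [CommRing R] {f : MvPolynomial σ R}
    (hsym : f.IsSymmetric) :
    ∃ g : MvPolynomial (Fin (Fintype.card σ)) R,
      weightedTotalDegree (fun i : Fin (Fintype.card σ) => (i : ℕ) + 1) g ≤ f.totalDegree ∧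
        ∀ x, eval x f = eval (esymmMap x) g := by
  obtain ⟨p, hp⟩ := esymmAlgHom_surjective (σ := σ) R le_rfl ⟨f, hsym⟩
  have hpf : aeval (fun i : Fin (Fintype.card σ) => esymm σ R (i + 1)) p = f := by
    rw [← esymmAlgHom_apply, hp]
  obtain ⟨g, hgdeg, hg⟩ := exists_weightedTotalDegree_le_aeval_eq
    (fun i : Fin (Fintype.card σ) => isHomogeneous_esymm σ R (i + 1)) p
  refine ⟨g, hpf ▸ hgdeg, fun x => ?_⟩
  rw [← hpf, ← hg]
  simp only [← coe_aeval_eq_eval, RingHom.coe_coe, comp_aeval_apply]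
  rfl

theorem eval_add_eval_eq_two_mul_of_esymmMap [CommRing R] {f : MvPolynomial σ R}
    (hsym : f.IsSymmetric) {k : ℕ} (hdeg : f.totalDegree < 2 * (k + 1))
    {c : Fin (Fintype.card σ) → R} (hc : ∀ i : Fin _, (i : ℕ) < k → c i = 0) {y z₁ z₂ : σ → R}
    (hz₁ : esymmMap z₁ = esymmMap y + c) (hz₂ : esymmMap z₂ = esymmMap y - c) :
    eval z₁ f + eval z₂ f = 2 * eval y f := by
  obtain ⟨g, hgdeg, hg⟩ := exists_weightedTotalDegree_le_eval_esymmMap hsym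
  rw [hg, hg, hg, hz₁, hz₂]
  exact eval_add_add_eval_sub_of_weightedTotalDegree_lt (hgdeg.trans_lt hdeg)
    (fun i hi => hc i (Nat.lt_of_succ_lt_succ hi)) _

theorem esymmMap_eq_coeff_nodal [CommRing R] (x : σ → R) (i : Fin (Fintype.card σ)) :
    esymmMap x i =
      (-1) ^ ((i : ℕ) + 1) * (Lagrange.nodal univ x).coeff (Fintype.card σ - (i + 1)) := by
  have hi : (i : ℕ) + 1 ≤ Fintype.card σ := i.isLt
  have hnodal : Lagrange.nodal univ x =
      ((univ.val.map x).map fun t => Polynomial.X - Polynomial.C t).prod := by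
    rw [Lagrange.nodal_eq, Multiset.map_map]
    rfl
  rw [hnodal, Multiset.prod_X_sub_C_coeff _ (by simp), esymmMap, ← coe_aeval_eq_eval]
  simp only [RingHom.coe_coe, aeval_esymm_eq_multiset_esymm, Multiset.card_map, card_val,
    card_univ, Nat.sub_sub_self hi]
  rw [← mul_assoc, ← mul_pow, neg_mul_neg, one_mul, one_pow, one_mul]

end ElementarySymmetricMap

section Perturbation

theorem eq_nodal_of_monic {ι R : Type*} [CommRing R] [IsDomain R] {s : Finset ι} {z : ι → R}
    (hz : Set.InjOn z s) {p : Polynomial R} (hp : p.Monic) (hdeg : p.degree = #s)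
    (hroot : ∀ i ∈ s, p.IsRoot (z i)) : p = Lagrange.nodal s z :=
  Polynomial.eq_of_degree_le_of_eval_index_eq s hz hdeg.le (hdeg.trans Lagrange.degree_nodal.symm)
    (hp.leadingCoeff.trans Lagrange.nodal_monic.leadingCoeff.symm)
    fun i hi => (hroot i hi).trans (Lagrange.eval_nodal_at_node hi).symm

variable {𝕜 : Type*} [NontriviallyNormedField 𝕜] [CompleteSpace 𝕜]

theorem eventually_exists_isRoot_add_C {p : Polynomial 𝕜} {a : 𝕜} (hroot : p.IsRoot a)
    (hsimple : p.derivative.eval a ≠ 0) {U : Set 𝕜} (hU : U ∈ 𝓝 a) :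
    ∀ᶠ ε in 𝓝 (0 : 𝕜), ∃ t ∈ U, (p + Polynomial.C ε).IsRoot t := by
  have himage : (fun t => p.eval t) '' U ∈ 𝓝 (0 : 𝕜) := by
    rw [← hroot.eq_zero, ← (p.hasStrictDerivAt a).map_nhds_eq hsimple]
    exact image_mem_map hU
  have hneg : Tendsto (fun ε : 𝕜 => -ε) (𝓝 0) (𝓝 0) := continuous_neg.tendsto' 0 0 neg_zero
  filter_upwards [hneg himage] with ε ⟨t, htU, ht⟩
  exact ⟨t, htU, by simp [ht]⟩

theorem eventually_exists_nodal_eq_add_C {ι : Type*} {s : Finset ι} {y : ι → 𝕜}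
    (hs : s.Nonempty) (hy : Set.InjOn y s) :
    ∀ᶠ ε in 𝓝 (0 : 𝕜), ∃ z : ι → 𝕜,
      Lagrange.nodal s z = Lagrange.nodal s y + Polynomial.C ε := by
  classical
  obtain ⟨U, hU, hdisj⟩ := (s.finite_toSet.image y).t2_separation
  have hroots : ∀ i ∈ s, ∀ᶠ ε in 𝓝 (0 : 𝕜),
      ∃ t ∈ U (y i), (Lagrange.nodal s y + Polynomial.C ε).IsRoot t := by
    refine fun i hi => eventually_exists_isRoot_add_C (Lagrange.eval_nodal_at_node hi) ?_
      ((hU (y i)).2.mem_nhds (hU (y i)).1)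
    rw [Lagrange.eval_nodal_derivative_eval_node_eq hi]
    exact Lagrange.eval_nodal_not_at_node fun j hj hij =>
      (mem_erase.mp hj).1 (hy (mem_erase.mp hj).2 hi hij.symm)
  filter_upwards [(eventually_all_finset s).2 hroots] with ε hε
  choose! z hzU hz using hε
  have hinj : Set.InjOn z s := fun i hi j hj hij => by_contra fun hne =>
    (hdisj (Set.mem_image_of_mem y hi) (Set.mem_image_of_mem y hj)
      fun h => hne (hy hi hj h)).le_bot ⟨hzU i hi, hij ▸ hzU j hj⟩
  have hlt : (Polynomial.C ε).degree < (Lagrange.nodal s y).degree := by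
    rw [Lagrange.degree_nodal]
    exact Polynomial.degree_C_le.trans_lt (by exact_mod_cast hs.card_pos)
  exact ⟨z, (eq_nodal_of_monic hinj (Lagrange.nodal_monic.add_of_left hlt)
    ((Polynomial.degree_add_eq_left_of_degree_lt hlt).trans Lagrange.degree_nodal) hz).symm⟩

variable {σ : Type*} [Fintype σ]

theorem nodal_univ_piecewise {R : Type*} [CommRing R] [DecidableEq σ] (s : Finset σ)
    (z y : σ → R) :
    Lagrange.nodal univ (s.piecewise z y) = Lagrange.nodal s z * Lagrange.nodal sᶜ y := by
  simp only [Lagrange.nodal_eq]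
  rw [← prod_mul_prod_compl s]
  congr 1
  · exact prod_congr rfl fun j hj => by rw [piecewise_eq_of_mem _ _ _ hj]
  · exact prod_congr rfl fun j hj => by rw [piecewise_eq_of_notMem _ _ _ (mem_compl.mp hj)]

theorem exists_eventually_esymmMap_eq_add_smul {k : Fin (Fintype.card σ)} {y : σ → 𝕜}
    {s : Finset σ} (hs : #s = k + 1) (hy : Set.InjOn y s) :
    ∃ c : Fin (Fintype.card σ) → 𝕜, (∀ i < k, c i = 0) ∧ c k ≠ 0 ∧
      ∀ᶠ ε in 𝓝 (0 : 𝕜), ∃ z : σ → 𝕜, esymmMap z = esymmMap y + ε • c := by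
  classical
  have hdeg : (Lagrange.nodal sᶜ y).natDegree = Fintype.card σ - (k + 1) := by
    rw [Lagrange.natDegree_nodal, card_compl, hs]
  refine ⟨fun i => (-1) ^ ((i : ℕ) + 1) *
    (Lagrange.nodal sᶜ y).coeff (Fintype.card σ - (i + 1)), fun i hi => ?_, ?_, ?_⟩
  · have hlt : (Lagrange.nodal sᶜ y).natDegree < Fintype.card σ - (i + 1) := by lia
    simp [Polynomial.coeff_eq_zero_of_natDegree_lt hlt]
  · have hcoeff : (Lagrange.nodal sᶜ y).coeff (Fintype.card σ - (k + 1)) = 1 :=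
      hdeg ▸ Lagrange.nodal_monic.coeff_natDegree
    simp [hcoeff]
  · filter_upwards [eventually_exists_nodal_eq_add_C (card_pos.mp (by lia)) hy] with ε ⟨z, hz⟩
    have hnodal : Lagrange.nodal univ (s.piecewise z y) =
        Lagrange.nodal univ y + Polynomial.C ε * Lagrange.nodal sᶜ y := by
      rw [nodal_univ_piecewise, hz, add_mul, ← nodal_univ_piecewise, piecewise_same]
    refine ⟨s.piecewise z y, funext fun i => ?_⟩
    simp only [Pi.add_apply, Pi.smul_apply, smul_eq_mul, esymmMap_eq_coeff_nodal, hnodal,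
      Polynomial.coeff_add, Polynomial.coeff_C_mul]
    ring

theorem exists_esymmMap_eq_add_and_eq_sub [DecidableEq 𝕜] {k : Fin (Fintype.card σ)}
    {y : σ → 𝕜} (hy : (k : ℕ) < #(univ.image y)) :
    ∃ c : Fin (Fintype.card σ) → 𝕜, (∀ i < k, c i = 0) ∧ c k ≠ 0 ∧
      ∃ z₁ z₂ : σ → 𝕜, esymmMap z₁ = esymmMap y + c ∧ esymmMap z₂ = esymmMap y - c := by
  obtain ⟨t, hty, ht⟩ := exists_subset_card_eq (Nat.succ_le_of_lt hy)
  obtain ⟨s, -, hinj, rfl⟩ := exists_subset_injOn_image_eq_of_surjOn (f := y) Set.univ t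
    fun v hv => by simpa using hty hv
  rw [card_image_of_injOn hinj] at ht
  obtain ⟨c, hc, hck, hev⟩ := exists_eventually_esymmMap_eq_add_smul ht hinj
  have hneg : Tendsto (fun ε : 𝕜 => -ε) (𝓝 0) (𝓝 0) := continuous_neg.tendsto' 0 0 neg_zero
  obtain ⟨ε, ⟨⟨z₁, hz₁⟩, z₂, hz₂⟩, hε⟩ :=
    (((hev.and (hneg.eventually hev)).filter_mono nhdsWithin_le_nhds).and
      (self_mem_nhdsWithin : {(0 : 𝕜)}ᶜ ∈ 𝓝[≠] 0)).exists
  exact ⟨ε • c, fun i hi => by simp [hc i hi], mul_ne_zero hε hck, z₁, z₂, hz₁,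
    by rw [hz₂, neg_smul, sub_eq_add_neg]⟩

end Perturbation

section VandermondeVariety

variable {σ : Type*} [Fintype σ]

/-- The real Vandermonde variety through `x`: the points at which the elementary symmetric
polynomials `e₁, …, eₖ` take the same values as at `x`. -/
def vandermondeVariety (k : Fin (Fintype.card σ)) (x : σ → ℝ) : Set (σ → ℝ) :=
  {y | ∀ i < k, esymmMap y i = esymmMap x i}

theorem psum_two_eq_esymm_one_sq_sub (σ R : Type*) [Fintype σ] [CommRing R] :
    psum σ R 2 = esymm σ R 1 ^ 2 - 2 * esymm σ R 2 := by
  classical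
  have hindex : {a ∈ antidiagonal 2 | a.1 ∈ Set.Ioo 0 2} = {(1, 1)} := by decide
  rw [psum_eq_mul_esymm_sub_sum σ R 2 two_pos, hindex, sum_singleton, psum_one, ← esymm_one]
  push_cast
  ring

theorem sum_sq_eq_of_mem_vandermondeVariety {k : Fin (Fintype.card σ)} (hk : 2 ≤ (k : ℕ))
    {x y : σ → ℝ} (hy : y ∈ vandermondeVariety k x) : ∑ j, y j ^ 2 = ∑ j, x j ^ 2 := by
  have hsum (z : σ → ℝ) :
      ∑ j, z j ^ 2 = eval z (esymm σ ℝ 1) ^ 2 - 2 * eval z (esymm σ ℝ 2) := by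
    simpa [psum] using congrArg (eval z) (psum_two_eq_esymm_one_sq_sub σ ℝ)
  have hone : eval y (esymm σ ℝ 1) = eval x (esymm σ ℝ 1) :=
    hy ⟨0, by lia⟩ (Fin.lt_def.mpr (by lia))
  have htwo : eval y (esymm σ ℝ 2) = eval x (esymm σ ℝ 2) :=
    hy ⟨1, by lia⟩ (Fin.lt_def.mpr (by lia))
  rw [hsum, hsum, hone, htwo]

theorem isClosed_vandermondeVariety (k : Fin (Fintype.card σ)) (x : σ → ℝ) :
    IsClosed (vandermondeVariety k x) := by
  simp only [vandermondeVariety, Set.ofPred_forall]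
  exact isClosed_iInter fun i => isClosed_iInter fun _ =>
    isClosed_eq (continuous_eval _) continuous_const

theorem isCompact_vandermondeVariety {k : Fin (Fintype.card σ)} (hk : 2 ≤ (k : ℕ)) (x : σ → ℝ) :
    IsCompact (vandermondeVariety k x) := by
  refine Metric.isCompact_of_isClosed_isBounded (isClosed_vandermondeVariety k x)
    (isBounded_iff_forall_norm_le.mpr ⟨√(∑ j, x j ^ 2), fun y hy => ?_⟩)
  refine (pi_norm_le_iff_of_nonneg (Real.sqrt_nonneg _)).mpr fun i => Real.abs_le_sqrt ?_
  rw [← sum_sq_eq_of_mem_vandermondeVariety hk hy]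
  exact single_le_sum (f := fun j => y j ^ 2) (fun j _ => sq_nonneg _) (mem_univ i)

end VandermondeVariety

section DegreePrinciple

theorem exists_isMinOn_lex {X α β : Type*} [TopologicalSpace X] [LinearOrder α]
    [TopologicalSpace α] [ClosedIicTopology α] [LinearOrder β] [TopologicalSpace β]
    [ClosedIicTopology β] {K : Set X} (hK : IsCompact K) (hne : K.Nonempty) {f : X → α} {g : X → β}
    (hf : Continuous f) (hg : ContinuousOn g K) :
    ∃ y ∈ K, IsMinOn f K y ∧ ∀ z ∈ K, f z = f y → g y ≤ g z := by
  obtain ⟨y₀, hy₀K, hy₀⟩ := hK.exists_isMinOn hne hf.continuousOn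
  obtain ⟨y, ⟨hyK, hyf⟩, hy⟩ := (hK.inter_right (isClosed_Iic.preimage hf)).exists_isMinOn
    ⟨y₀, hy₀K, le_refl (f y₀)⟩ (hg.mono Set.inter_subset_left)
  exact ⟨y, hyK, fun z hz => le_trans hyf (hy₀ hz), fun z hz hzy => hy ⟨hz, hzy.trans_le hyf⟩⟩

variable {σ : Type*} [Fintype σ] {f : MvPolynomial σ ℝ}

theorem card_image_le_of_isMinOn_lex (hsym : f.IsSymmetric) {k : Fin (Fintype.card σ)}
    (hdeg : f.totalDegree < 2 * ((k : ℕ) + 1)) {x y : σ → ℝ} (hyx : y ∈ vandermondeVariety k x)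
    (hmin : IsMinOn (fun z => eval z f) (vandermondeVariety k x) y)
    (hlex : ∀ z ∈ vandermondeVariety k x, eval z f = eval y f → esymmMap y k ≤ esymmMap z k) :
    #(univ.image y) ≤ k := by
  by_contra! hcard
  obtain ⟨c, hc, hck, z₁, z₂, hz₁, hz₂⟩ := exists_esymmMap_eq_add_and_eq_sub hcard
  have hz₁x : z₁ ∈ vandermondeVariety k x := fun i hi => by
    rw [hz₁, Pi.add_apply, hc i hi, add_zero, hyx i hi]
  have hz₂x : z₂ ∈ vandermondeVariety k x := fun i hi => by
    rw [hz₂, Pi.sub_apply, hc i hi, sub_zero, hyx i hi]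
  have hmid : eval z₁ f + eval z₂ f = 2 * eval y f :=
    eval_add_eval_eq_two_mul_of_esymmMap hsym hdeg (fun i hi => hc i hi) hz₁ hz₂
  have hle₁ : eval y f ≤ eval z₁ f := hmin hz₁x
  have hle₂ : eval y f ≤ eval z₂ f := hmin hz₂x
  have hadd : esymmMap y k ≤ esymmMap y k + c k :=
    (hlex z₁ hz₁x (by linarith)).trans_eq (congrFun hz₁ k)
  have hsub : esymmMap y k ≤ esymmMap y k - c k :=
    (hlex z₂ hz₂x (by linarith)).trans_eq (congrFun hz₂ k)
  exact hck (by linarith)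

theorem exists_card_image_le_and_eval_le (hsym : f.IsSymmetric) {k : ℕ} (hk : 2 ≤ k)
    (hdeg : f.totalDegree < 2 * (k + 1)) (x : σ → ℝ) :
    ∃ y : σ → ℝ, #(univ.image y) ≤ k ∧ eval y f ≤ eval x f := by
  rcases le_or_gt (Fintype.card σ) k with hcard | hcard
  · exact ⟨x, card_image_le.trans hcard, le_rfl⟩
  · lift k to Fin (Fintype.card σ) using hcard
    have hxx : x ∈ vandermondeVariety k x := fun _ _ => rfl
    obtain ⟨y, hyx, hmin, hlex⟩ := exists_isMinOn_lex (isCompact_vandermondeVariety hk x)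
      ⟨x, hxx⟩ (continuous_eval f) (continuous_eval (esymm σ ℝ (k + 1))).continuousOn
    exact ⟨y, card_image_le_of_isMinOn_lex hsym hdeg hyx hmin hlex, hmin hxx⟩

theorem half_degree_principle_general (hsym : f.IsSymmetric) {k : ℕ} (hk : 2 ≤ k)
    (hdeg : f.totalDegree < 2 * (k + 1)) :
    (∀ x : σ → ℝ, 0 ≤ eval x f) ↔ ∀ y : σ → ℝ, #(univ.image y) ≤ k → 0 ≤ eval y f := by
  refine ⟨fun h y _ => h y, fun h x => ?_⟩
  obtain ⟨y, hyk, hyx⟩ := exists_card_image_le_and_eval_le hsym hk hdeg x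
  exact (h y hyk).trans hyx

end DegreePrinciple

/-- **Half degree principle.** A symmetric form `f` of degree `2d` in `n` real
variables is nonnegative on `ℝ^n` if and only if it is nonnegative on the set
`A_k` of points with at most `k = max 2 d` distinct coordinates. -/
theorem half_degree_principle (n d : ℕ) (f : MvPolynomial (Fin n) ℝ)
    (hsym : f.IsSymmetric) (hhom : f.IsHomogeneous (2 * d)) :
    (∀ x : Fin n → ℝ, 0 ≤ eval x f) ↔
    (∀ y : Fin n → ℝ, (Finset.univ.image y).card ≤ max 2 d → 0 ≤ eval y f) :=
  half_degree_principle_general hsym (le_max_left 2 d) (by have := hhom.totalDegree_le; lia)
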